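/- arXiv:2408.06692 — 2 statements merged into one kernel-verified Lean document; each statement's English description precedes it below -/
import Mathlib

section
/- Let N ≥ 5, let Z ⊂ ℝ^N be compact with 0 ∉ Z, and suppose the biharmonic capacity Cap_Δ(Z; ℝ^N) = 0. Then the Kelvin image K(Z) = { x/|x|² : x ∈ Z } also satisfies Cap_Δ(K(Z); ℝ^N) = 0. -/
open MeasureTheory Metric Set Filter

noncomputable section

abbrev E (N : ℕ) := EuclideanSpace ℝ (Fin N)

def lap {N : ℕ} (f : E N → ℝ) (x : E N) : ℝ :=
  ∑ i : Fin N, fderiv ℝ (fun y => fderiv ℝ f y (EuclideanSpace.single i 1)) x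
    (EuclideanSpace.single i 1)

def capD {N : ℕ} (U Z : Set (E N)) : ℝ :=
  sInf { c | ∃ φ : E N → ℝ, ContDiff ℝ (⊤ : ℕ∞) φ ∧ HasCompactSupport φ ∧ tsupport φ ⊆ U ∧
      (∃ V, IsOpen V ∧ Z ⊆ V ∧ ∀ x ∈ V, 1 ≤ φ x) ∧ c = ∫ x in U, (lap φ x) ^ 2 }

/-- The `i`-th partial derivative. -/
def partialDeriv {N : ℕ} (i : Fin N) (f : E N → ℝ) (x : E N) : ℝ :=
  fderiv ℝ f x (EuclideanSpace.single i 1)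

/-- Smooth functions with compact support. -/
def IsTest {N : ℕ} (f : E N → ℝ) : Prop :=
  ContDiff ℝ (⊤ : ℕ∞) f ∧ HasCompactSupport f

variable {N : ℕ} {f g : E N → ℝ}

theorem lap_eq_sum (f : E N → ℝ) (x : E N) :
    lap f x = ∑ i, partialDeriv i (partialDeriv i f) x := rfl

theorem contDiff_partialDeriv (i : Fin N) (hf : ContDiff ℝ (⊤ : ℕ∞) f) :
    ContDiff ℝ (⊤ : ℕ∞) (partialDeriv i f) :=
  (hf.fderiv_right (m := (⊤ : ℕ∞)) (by simp)).clm_apply contDiff_const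

theorem IsTest.partialDeriv (i : Fin N) (hf : IsTest f) : IsTest (partialDeriv i f) :=
  ⟨contDiff_partialDeriv i hf.1, hf.2.fderiv_apply _ _⟩

theorem IsTest.mul_left (hf : IsTest f) (hg : ContDiff ℝ (⊤ : ℕ∞) g) :
    IsTest (fun x => g x * f x) :=
  ⟨hg.mul hf.1, hf.2.mul_left⟩

theorem IsTest.mul_right (hf : IsTest f) (hg : ContDiff ℝ (⊤ : ℕ∞) g) :
    IsTest (fun x => f x * g x) :=
  ⟨hf.1.mul hg, hf.2.mul_right⟩

theorem IsTest.integrable (hf : IsTest f) : Integrable f :=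
  hf.1.continuous.integrable_of_hasCompactSupport hf.2

theorem IsTest.integrable_sq (hf : IsTest f) : Integrable (fun x => f x ^ 2) := by
  simpa only [sq] using (hf.mul_left hf.1).integrable

theorem partialDeriv_partialDeriv (hf : ContDiff ℝ (⊤ : ℕ∞) f) (i j : Fin N) (x : E N) :
    partialDeriv i (partialDeriv j f) x =
      fderiv ℝ (fderiv ℝ f) x (EuclideanSpace.single i 1) (EuclideanSpace.single j 1) := by
  have hd : Differentiable ℝ (fderiv ℝ f) :=
    (hf.fderiv_right (m := (⊤ : ℕ∞)) (by simp)).differentiable (by simp)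
  have h := (hd x).hasFDerivAt.clm_apply (hasFDerivAt_const (EuclideanSpace.single j (1 : ℝ)) x)
  have e := HasFDerivAt.fderiv (f := partialDeriv j f) h
  rw [partialDeriv, e]
  simp

theorem partialDeriv_comm (hf : ContDiff ℝ (⊤ : ℕ∞) f) (i j : Fin N) :
    partialDeriv i (partialDeriv j f) = partialDeriv j (partialDeriv i f) := by
  funext x
  rw [partialDeriv_partialDeriv hf, partialDeriv_partialDeriv hf]
  refine (hf.contDiffAt.isSymmSndFDerivAt ?_) _ _
  rw [minSmoothness_of_isRCLikeNormedField]
  exact WithTop.coe_le_coe.2 le_top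

theorem integral_mul_partialDeriv (hf : IsTest f) (hg : ContDiff ℝ (⊤ : ℕ∞) g) (i : Fin N) :
    ∫ x, f x * partialDeriv i g x = -∫ x, partialDeriv i f x * g x :=
  integral_mul_fderiv_eq_neg_fderiv_mul_of_integrable
    ((hf.partialDeriv i).mul_right hg).integrable
    (hf.mul_right (contDiff_partialDeriv i hg)).integrable
    (hf.mul_right hg).integrable
    (fun x _ => hf.1.differentiable (by simp) x) (fun x _ => hg.differentiable (by simp) x)

theorem integral_partialDeriv_eq_zero (hf : IsTest f) (i : Fin N) :
    ∫ x, partialDeriv i f x = 0 := by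
  have h := integral_mul_partialDeriv hf (contDiff_const (c := (1 : ℝ))) i
  simpa [partialDeriv] using h

theorem integral_sq_partialDeriv_partialDeriv (hf : IsTest f) (i j : Fin N) :
    ∫ x, (partialDeriv i (partialDeriv j f) x) ^ 2 =
      ∫ x, partialDeriv i (partialDeriv i f) x * partialDeriv j (partialDeriv j f) x := by
  simp only [sq]
  rw [integral_mul_partialDeriv ((hf.partialDeriv j).partialDeriv i) (hf.partialDeriv j).1]
  rw [partialDeriv_comm hf.1 i j, partialDeriv_comm (hf.partialDeriv i).1 i j]
  rw [integral_mul_partialDeriv ((hf.partialDeriv i).partialDeriv i) (hf.partialDeriv j).1]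

/-- The sum of the squares of all second-order partial derivatives. -/
def hessSq (f : E N → ℝ) (x : E N) : ℝ := ∑ i, ∑ j, (partialDeriv i (partialDeriv j f) x) ^ 2

/-- The squared length of the gradient. -/
def gradSq (f : E N → ℝ) (x : E N) : ℝ := ∑ i, (partialDeriv i f x) ^ 2

theorem integral_hessSq (hf : IsTest f) : ∫ x, hessSq f x = ∫ x, (lap f x) ^ 2 := by
  simp only [hessSq, lap_eq_sum, sq, Finset.sum_mul_sum]
  rw [integral_finsetSum, integral_finsetSum]
  · refine Finset.sum_congr rfl fun i _ => ?_
    rw [integral_finsetSum, integral_finsetSum]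
    · refine Finset.sum_congr rfl fun j _ => ?_
      simpa only [sq] using integral_sq_partialDeriv_partialDeriv hf i j
    · exact fun j _ =>
        (((hf.partialDeriv i).partialDeriv i).mul_right
          ((hf.partialDeriv j).partialDeriv j).1).integrable
    · exact fun j _ =>
        (((hf.partialDeriv j).partialDeriv i).mul_right
          ((hf.partialDeriv j).partialDeriv i).1).integrable
  · exact fun i _ => integrable_finsetSum _ fun j _ =>
      (((hf.partialDeriv i).partialDeriv i).mul_right
          ((hf.partialDeriv j).partialDeriv j).1).integrable
  · exact fun i _ => integrable_finsetSum _ fun j _ =>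
      (((hf.partialDeriv j).partialDeriv i).mul_right
          ((hf.partialDeriv j).partialDeriv i).1).integrable

/-- The weight `1 / (1 + |x|²)`. -/
def wt (x : E N) : ℝ := (1 + ‖x‖ ^ 2)⁻¹

theorem wt_pos (x : E N) : 0 < wt x := by unfold wt; positivity

theorem wt_mul (x : E N) : ‖x‖ ^ 2 * wt x = 1 - wt x := by
  unfold wt; field_simp; ring

theorem contDiff_wt : ContDiff ℝ (⊤ : ℕ∞) (wt : E N → ℝ) :=
  (contDiff_const.add (contDiff_norm_sq ℝ)).inv fun x => by positivity

theorem contDiff_coord (i : Fin N) : ContDiff ℝ (⊤ : ℕ∞) (fun x : E N => x i) := by fun_prop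

theorem partialDeriv_wt_mul (k : ℕ) (hf : ContDiff ℝ (⊤ : ℕ∞) f) (i : Fin N) (x : E N) :
    partialDeriv i (fun y => f y ^ 2 * (y i * wt y ^ (k + 1))) x =
      2 * f x * partialDeriv i f x * (x i * wt x ^ (k + 1)) +
        f x ^ 2 * (wt x ^ (k + 1) - 2 * (k + 1) * (x i) ^ 2 * wt x ^ (k + 2)) := by
  have hf' : HasFDerivAt f (fderiv ℝ f x) x := (hf.differentiable (by simp) x).hasFDerivAt
  have hx : HasFDerivAt (fun y : E N => y i) (EuclideanSpace.proj i : E N →L[ℝ] ℝ) x :=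
    (EuclideanSpace.proj i : E N →L[ℝ] ℝ).hasFDerivAt
  have hn : HasFDerivAt (fun y : E N => 1 + ‖y‖ ^ 2) (2 • innerSL ℝ x) x :=
    (hasStrictFDerivAt_norm_sq x).hasFDerivAt.const_add 1
  have hw : HasFDerivAt (wt : E N → ℝ) _ x :=
    (hasDerivAt_inv (show (1 + ‖x‖ ^ 2 : ℝ) ≠ 0 by positivity)).comp_hasFDerivAt x hn
  have h := (hf'.pow 2).mul (hx.mul (hw.pow (k + 1)))
  unfold partialDeriv
  rw [HasFDerivAt.fderiv (f := fun y => f y ^ 2 * (y i * wt y ^ (k + 1))) h]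
  have e : wt x = (1 + ‖x‖ ^ 2)⁻¹ := rfl
  simp [EuclideanSpace.inner_single_right]
  rw [show ((1 + ‖x‖ ^ 2) ^ 2)⁻¹ = wt x ^ 2 by rw [e]; simp]
  ring

theorem sum_sq_coord (x : E N) : ∑ i, (x i) ^ 2 = ‖x‖ ^ 2 := by
  simp [EuclideanSpace.norm_sq_eq]

theorem integral_sq_mul_wt_pow_le (k : ℕ) (hN : 2 * k + 3 ≤ N) (hf : IsTest f) :
    ∫ x, f x ^ 2 * wt x ^ (k + 1) ≤ 4 * ∫ x, gradSq f x * wt x ^ k := by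
  have hX : ∀ i : Fin N, IsTest (fun y => f y ^ 2 * (y i * wt y ^ (k + 1))) := fun i => by
    have := (hf.mul_left hf.1).mul_right ((contDiff_coord i).mul (contDiff_wt.pow (k + 1)))
    simpa only [sq] using this
  have hXint : ∀ i : Fin N,
      Integrable (partialDeriv i (fun y => f y ^ 2 * (y i * wt y ^ (k + 1)))) :=
    fun i => ((hX i).partialDeriv i).integrable
  have h1 : Integrable (fun x => gradSq f x * wt x ^ k) := by
    simp only [gradSq, Finset.sum_mul, sq]
    exact integrable_finsetSum _ fun i _ =>
      (((hf.partialDeriv i).mul_left (hf.partialDeriv i).1).mul_right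
        (contDiff_wt.pow k)).integrable
  have h2 : Integrable (fun x => f x ^ 2 * wt x ^ (k + 1)) := by
    simp only [sq]
    exact ((hf.mul_left hf.1).mul_right (contDiff_wt.pow (k + 1))).integrable
  have h0 : ∫ x, ∑ i, partialDeriv i (fun y => f y ^ 2 * (y i * wt y ^ (k + 1))) x = 0 := by
    rw [integral_finsetSum _ fun i _ => hXint i]
    exact Finset.sum_eq_zero fun i _ => integral_partialDeriv_eq_zero (hX i) i
  have hle : ∀ x, f x ^ 2 * wt x ^ (k + 1) ≤ 4 * (gradSq f x * wt x ^ k) +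
      2 * ∑ i, partialDeriv i (fun y => f y ^ 2 * (y i * wt y ^ (k + 1))) x := by
    intro x
    have hw := wt_pos x
    have hwk : 0 < wt x ^ k := pow_pos hw k
    have hAM : ∀ i, -(f x ^ 2 * (x i) ^ 2 * wt x ^ (k + 2) / 2 +
        2 * ((partialDeriv i f x) ^ 2 * wt x ^ k)) ≤
        2 * f x * partialDeriv i f x * (x i * wt x ^ (k + 1)) := fun i => by
      have := mul_nonneg hwk.le (sq_nonneg (f x * x i * wt x + 2 * partialDeriv i f x))
      have e : f x ^ 2 * (x i) ^ 2 * wt x ^ (k + 2) / 2 +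
        2 * ((partialDeriv i f x) ^ 2 * wt x ^ k) +
        2 * f x * partialDeriv i f x * (x i * wt x ^ (k + 1)) =
          wt x ^ k * (f x * x i * wt x + 2 * partialDeriv i f x) ^ 2 / 2 := by ring
      linarith
    have hs : ∑ i, (-(f x ^ 2 * (x i) ^ 2 * wt x ^ (k + 2) / 2 +
        2 * ((partialDeriv i f x) ^ 2 * wt x ^ k)) +
        f x ^ 2 * (wt x ^ (k + 1) - 2 * (k + 1) * (x i) ^ 2 * wt x ^ (k + 2))) ≤
        ∑ i, partialDeriv i (fun y => f y ^ 2 * (y i * wt y ^ (k + 1))) x :=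
      Finset.sum_le_sum fun i _ => by
        rw [partialDeriv_wt_mul k hf.1]; linarith [hAM i]
    have he : ∑ i, (-(f x ^ 2 * (x i) ^ 2 * wt x ^ (k + 2) / 2 +
        2 * ((partialDeriv i f x) ^ 2 * wt x ^ k)) +
        f x ^ 2 * (wt x ^ (k + 1) - 2 * (k + 1) * (x i) ^ 2 * wt x ^ (k + 2))) =
        -(f x ^ 2 * wt x ^ (k + 2) / 2) * ‖x‖ ^ 2 - 2 * (gradSq f x * wt x ^ k) +
        f x ^ 2 * (N * wt x ^ (k + 1) - 2 * (k + 1) * wt x ^ (k + 2) * ‖x‖ ^ 2) := by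
      rw [← sum_sq_coord, gradSq]
      have : (N : ℝ) * wt x ^ (k + 1) = ∑ i : Fin N, wt x ^ (k + 1) := by simp
      rw [this]
      simp only [Finset.mul_sum, Finset.sum_mul, ← Finset.sum_sub_distrib,
        ← Finset.sum_add_distrib]
      exact Finset.sum_congr rfl fun i _ => by ring
    have hr : wt x ^ (k + 2) * ‖x‖ ^ 2 = wt x ^ (k + 1) * (1 - wt x) := by
      rw [← wt_mul]; ring
    have hNr : (2 * k + 3 : ℝ) ≤ N := by exact_mod_cast hN
    have hp : 0 ≤ f x ^ 2 * wt x ^ (k + 1) := by positivity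
    have e2 : -(f x ^ 2 * wt x ^ (k + 2) / 2) * ‖x‖ ^ 2 - 2 * (gradSq f x * wt x ^ k) +
        f x ^ 2 * (N * wt x ^ (k + 1) - 2 * (k + 1) * wt x ^ (k + 2) * ‖x‖ ^ 2) =
        -2 * (gradSq f x * wt x ^ k) + (f x ^ 2 * wt x ^ (k + 1)) *
          (N - (2 * k + 5 / 2) * (1 - wt x)) := by
      linear_combination (-(f x ^ 2 / 2) - 2 * (k + 1) * f x ^ 2) * hr
    have h3 : (1 / 2 : ℝ) ≤ N - (2 * k + 5 / 2) * (1 - wt x) := by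
      have : 0 ≤ (2 * k + 5 / 2) * wt x := by positivity
      linarith
    have h4 := mul_le_mul_of_nonneg_left h3 hp
    linarith
  calc ∫ x, f x ^ 2 * wt x ^ (k + 1) ≤ ∫ x, (4 * (gradSq f x * wt x ^ k) +
      2 * ∑ i, partialDeriv i (fun y => f y ^ 2 * (y i * wt y ^ (k + 1))) x) :=
        integral_mono h2 ((h1.const_mul 4).add
          ((integrable_finsetSum _ fun i _ => hXint i).const_mul 2)) hle
    _ = _ := by
      rw [integral_add (h1.const_mul 4)
        ((integrable_finsetSum _ fun i _ => hXint i).const_mul 2), integral_const_mul,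
        integral_const_mul, h0]
      simp

/-- A weighted density that controls all derivatives of order at most two on bounded sets. -/
def energy (f : E N → ℝ) (x : E N) : ℝ :=
  f x ^ 2 * wt x ^ 2 + gradSq f x * wt x + hessSq f x

theorem IsTest.continuous_energy (hf : IsTest f) : Continuous (energy f) := by
  unfold energy gradSq hessSq
  have hw : Continuous (wt : E N → ℝ) := contDiff_wt.continuous
  have h0 := hf.1.continuous
  have h1 := fun i => (hf.partialDeriv i).1.continuous
  have h2 := fun i j => ((hf.partialDeriv i).partialDeriv j).1.continuous
  fun_prop

theorem energy_nonneg (f : E N → ℝ) (x : E N) : 0 ≤ energy f x := by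
  have := wt_pos x
  unfold energy gradSq hessSq
  positivity

theorem integrable_energy_and_integral_le (hN : 5 ≤ N) (hf : IsTest f) :
    Integrable (energy f) ∧ ∫ x, energy f x ≤ 21 * ∫ x, (lap f x) ^ 2 := by
  have i0 : Integrable (fun x => f x ^ 2 * wt x ^ 2) := by
    simp only [sq (f _)]
    exact ((hf.mul_left hf.1).mul_right (contDiff_wt.pow 2)).integrable
  have i1' : ∀ i : Fin N, Integrable (fun x => partialDeriv i f x ^ 2 * wt x) := fun i => by
    simp only [sq]
    exact (((hf.partialDeriv i).mul_left (hf.partialDeriv i).1).mul_right contDiff_wt).integrable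
  have i1 : Integrable (fun x => gradSq f x * wt x) := by
    simp only [gradSq, Finset.sum_mul]
    exact integrable_finsetSum _ fun i _ => i1' i
  have i2' : ∀ i : Fin N, Integrable (fun x => gradSq (partialDeriv i f) x) := fun i =>
    integrable_finsetSum _ fun j _ => ((hf.partialDeriv i).partialDeriv j).integrable_sq
  have hH : ∀ x, hessSq f x = ∑ i, gradSq (partialDeriv i f) x := fun x => Finset.sum_comm
  have i2 : Integrable (fun x => hessSq f x) := by
    simp only [hH]
    exact integrable_finsetSum _ fun i _ => i2' i
  refine ⟨(i0.add i1).add i2, ?_⟩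
  have a0 := integral_sq_mul_wt_pow_le 1 (by omega) hf
  have a1 : ∫ x, gradSq f x * wt x ≤ 4 * ∫ x, hessSq f x := by
    simp only [hH, gradSq, Finset.sum_mul]
    simp only [← gradSq.eq_1]
    rw [integral_finsetSum _ fun i _ => i1' i, integral_finsetSum _ fun i _ => i2' i,
      Finset.mul_sum]
    refine Finset.sum_le_sum fun i _ => ?_
    simpa using integral_sq_mul_wt_pow_le 0 (by omega) (hf.partialDeriv i)
  simp only [pow_one, Nat.reduceAdd] at a0
  rw [← integral_hessSq hf]
  have e : ∫ x, energy f x = ((∫ x, f x ^ 2 * wt x ^ 2) + ∫ x, gradSq f x * wt x) +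
      ∫ x, hessSq f x := by
    rw [← integral_add i0 i1]
    exact integral_add (i0.add i1) i2
  linarith

theorem norm_sq_le_sum_norm_sq_apply_single {F : Type*} [NormedAddCommGroup F] [NormedSpace ℝ F]
    (L : E N →L[ℝ] F) : ‖L‖ ^ 2 ≤ N * ∑ i, ‖L (EuclideanSpace.single i 1)‖ ^ 2 := by
  have h : ‖L‖ ≤ ∑ i, ‖L (EuclideanSpace.single i 1)‖ := by
    refine L.opNorm_le_bound (by positivity) fun x => ?_
    have hx : x = ∑ i, x i • EuclideanSpace.single i (1 : ℝ) := by
      simpa using ((EuclideanSpace.basisFun (Fin N) ℝ).sum_repr x).symm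
    calc ‖L x‖ = ‖∑ i, x i • L (EuclideanSpace.single i 1)‖ := by
          conv_lhs => rw [hx]
          simp
      _ ≤ ∑ i, ‖x i • L (EuclideanSpace.single i 1)‖ := norm_sum_le _ _
      _ ≤ ∑ i, ‖L (EuclideanSpace.single i 1)‖ * ‖x‖ := Finset.sum_le_sum fun i _ => by
          rw [norm_smul, mul_comm]
          exact mul_le_mul_of_nonneg_left (PiLp.norm_apply_le x i) (norm_nonneg _)
      _ = _ := by rw [Finset.sum_mul]
  calc ‖L‖ ^ 2 ≤ (∑ i, ‖L (EuclideanSpace.single i 1)‖) ^ 2 := by gcongr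
    _ ≤ _ := by simpa using sq_sum_le_card_mul_sum_sq (s := Finset.univ)
                  (f := fun i : Fin N => ‖L (EuclideanSpace.single i 1)‖)

theorem norm_iteratedFDeriv_sq_le_energy (hf : ContDiff ℝ (⊤ : ℕ∞) f) (x : E N) {n : ℕ}
    (hn : n ≤ 2) :
    ‖iteratedFDeriv ℝ n f x‖ ^ 2 ≤ (N + 1) ^ 2 * (1 + ‖x‖ ^ 2) ^ 2 * energy f x := by
  have hw := wt_pos x
  set s := 1 + ‖x‖ ^ 2 with hs
  have hs1 : 1 ≤ s := by rw [hs]; nlinarith [sq_nonneg ‖x‖]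
  have hsw : s * wt x = 1 := mul_inv_cancel₀ (by positivity)
  have hN : (0 : ℝ) ≤ N := Nat.cast_nonneg N
  have hg : 0 ≤ gradSq f x := by unfold gradSq; positivity
  have hh : 0 ≤ hessSq f x := by unfold hessSq; positivity
  have he : s ^ 2 * energy f x = f x ^ 2 + s * gradSq f x + s ^ 2 * hessSq f x := by
    unfold energy
    linear_combination (f x ^ 2 * (s * wt x + 1) + s * gradSq f x) * hsw
  have h1 : gradSq f x ≤ s * gradSq f x := le_mul_of_one_le_left hg hs1
  have h2 : hessSq f x ≤ s ^ 2 * hessSq f x := le_mul_of_one_le_left hh (one_le_pow₀ hs1)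
  have hsum : f x ^ 2 + gradSq f x + hessSq f x ≤ s ^ 2 * energy f x := by linarith
  have hf0 := sq_nonneg (f x)
  rw [mul_assoc]
  refine le_trans ?_ (mul_le_mul_of_nonneg_left hsum (by positivity))
  have c1 : (1 : ℝ) ≤ (N + 1) ^ 2 := by nlinarith
  have c2 : (N : ℝ) ≤ (N + 1) ^ 2 := by nlinarith
  have c3 : (N : ℝ) * N ≤ (N + 1) ^ 2 := by nlinarith
  have hpos : (0 : ℝ) ≤ (N + 1) ^ 2 := by positivity
  have m0 := mul_nonneg hpos hf0
  have m1 := mul_nonneg hpos hg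
  have m2 := mul_nonneg hpos hh
  rw [mul_add, mul_add]
  interval_cases n
  · have := mul_le_mul_of_nonneg_right c1 hf0
    simp
    linarith
  · have e : ‖iteratedFDeriv ℝ 1 f x‖ = ‖fderiv ℝ f x‖ := by
      rw [← norm_iteratedFDeriv_fderiv]; simp
    have h := norm_sq_le_sum_norm_sq_apply_single (fderiv ℝ f x)
    have h' : ∑ i, ‖fderiv ℝ f x (EuclideanSpace.single i 1)‖ ^ 2 = gradSq f x := by
      simp [gradSq, partialDeriv]
    rw [h'] at h
    rw [e]
    have := mul_le_mul_of_nonneg_right c2 hg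
    linarith
  · have e : ‖iteratedFDeriv ℝ 2 f x‖ = ‖fderiv ℝ (fderiv ℝ f) x‖ := by
      rw [← norm_iteratedFDeriv_fderiv, ← norm_iteratedFDeriv_fderiv]; simp
    have h := norm_sq_le_sum_norm_sq_apply_single (fderiv ℝ (fderiv ℝ f) x)
    have h' : ∑ i, ‖fderiv ℝ (fderiv ℝ f) x (EuclideanSpace.single i 1)‖ ^ 2 ≤
        N * hessSq f x := by
      rw [hessSq, Finset.mul_sum]
      refine Finset.sum_le_sum fun i _ => ?_
      refine (norm_sq_le_sum_norm_sq_apply_single _).trans_eq ?_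
      simp [partialDeriv_partialDeriv hf]
    rw [e]
    have := mul_le_mul_of_nonneg_right c3 hh
    have := mul_le_mul_of_nonneg_left h' hN
    linarith

theorem abs_lap_le (hf : ContDiff ℝ (⊤ : ℕ∞) f) (x : E N) :
    |lap f x| ≤ N * ‖iteratedFDeriv ℝ 2 f x‖ := by
  have e : ‖iteratedFDeriv ℝ 2 f x‖ = ‖fderiv ℝ (fderiv ℝ f) x‖ := by
    rw [← norm_iteratedFDeriv_fderiv, ← norm_iteratedFDeriv_fderiv]; simp
  rw [lap_eq_sum, e]
  calc |∑ i, partialDeriv i (partialDeriv i f) x|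
      ≤ ∑ i : Fin N, |partialDeriv i (partialDeriv i f) x| := Finset.abs_sum_le_sum_abs _ _
    _ ≤ ∑ _i : Fin N, ‖fderiv ℝ (fderiv ℝ f) x‖ := Finset.sum_le_sum fun i _ => by
        rw [partialDeriv_partialDeriv hf, ← Real.norm_eq_abs]
        simpa using (fderiv ℝ (fderiv ℝ f) x).le_opNorm₂ (EuclideanSpace.single i 1)
          (EuclideanSpace.single i 1)
    _ = _ := by simp

/-- Kelvin inversion in the unit sphere. -/
def kelvin (x : E N) : E N := (‖x‖ ^ 2)⁻¹ • x

theorem kelvin_kelvin (x : E N) : kelvin (kelvin x) = x := by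
  rcases eq_or_ne x 0 with rfl | hx
  · simp [kelvin]
  · have : ‖x‖ ≠ 0 := norm_ne_zero_iff.2 hx
    simp only [kelvin, norm_smul, smul_smul, norm_inv, norm_pow, norm_norm]
    rw [show ((‖x‖ ^ 2)⁻¹ * ‖x‖) ^ 2 = (‖x‖ ^ 2)⁻¹ by field_simp, inv_inv,
      mul_inv_cancel₀ (by positivity), one_smul]

theorem kelvin_ne_zero {x : E N} (hx : x ≠ 0) : kelvin x ≠ 0 := fun h => hx <| by
  rw [← kelvin_kelvin x, h]; simp [kelvin]

theorem contDiffAt_kelvin {x : E N} (hx : x ≠ 0) :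
    ContDiffAt ℝ (⊤ : ℕ∞) (kelvin : E N → E N) x :=
  ((contDiff_norm_sq ℝ).contDiffAt.inv (by simpa using hx)).smul contDiffAt_id

theorem continuousOn_kelvin : ContinuousOn (kelvin : E N → E N) {0}ᶜ :=
  fun _ hx => (contDiffAt_kelvin hx).continuousAt.continuousWithinAt

theorem isCompact_kelvin_image {A : Set (E N)} (hA : IsCompact A) (h0 : (0 : E N) ∉ A) :
    IsCompact (kelvin '' A) ∧ (0 : E N) ∉ kelvin '' A := by
  refine ⟨hA.image_of_continuousOn
    (continuousOn_kelvin.mono (subset_compl_singleton_iff.2 h0)), ?_⟩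
  rintro ⟨x, hx, h⟩
  exact kelvin_ne_zero (fun h' => h0 (h' ▸ hx)) h

theorem exists_setIntegral_comp_kelvin_le {A : Set (E N)} (hA : IsCompact A)
    (h0 : (0 : E N) ∉ A) :
    ∃ C, 0 ≤ C ∧ ∀ F : E N → ℝ, Integrable F → (∀ x, 0 ≤ F x) →
      ∫ y in A, F (kelvin y) ≤ C * ∫ x, F x := by
  obtain ⟨hB, hB0⟩ := isCompact_kelvin_image hA h0
  set B := kelvin '' A with hBdef
  have hBsub : B ⊆ {0}ᶜ := subset_compl_singleton_iff.2 hB0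
  have hinj : Function.Injective (kelvin : E N → E N) :=
    Function.LeftInverse.injective kelvin_kelvin
  have hBA : kelvin '' B = A := by
    rw [hBdef, image_image]; simp [kelvin_kelvin]
  have hcont : ContinuousOn (fun x : E N => (fderiv ℝ kelvin x).det) B := by
    refine ContinuousLinearMap.continuous_det.comp_continuousOn fun x hx => ?_
    exact ((contDiffAt_kelvin (hBsub hx)).fderiv_right (m := (⊤ : ℕ∞))
      (by simp)).continuousAt.continuousWithinAt
  obtain ⟨C, hC⟩ := hB.exists_bound_of_continuousOn hcont
  refine ⟨|C|, abs_nonneg _, fun F hF hF0 => ?_⟩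
  have hcov := integral_image_eq_integral_abs_det_fderiv_smul volume hB.measurableSet
    (fun x hx => ((contDiffAt_kelvin (hBsub hx)).differentiableAt
      (by simp)).hasFDerivAt.hasFDerivWithinAt) hinj.injOn (fun y => F (kelvin y))
  rw [hBA] at hcov
  rw [hcov]
  simp only [kelvin_kelvin, smul_eq_mul]
  calc ∫ x in B, |(fderiv ℝ kelvin x).det| * F x ≤ ∫ x in B, |C| * F x := by
        refine integral_mono_of_nonneg (ae_of_all _ fun x => mul_nonneg (abs_nonneg _) (hF0 x))
          (hF.integrableOn.const_mul _) ?_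
        filter_upwards [ae_restrict_mem hB.measurableSet] with x hx
        exact mul_le_mul_of_nonneg_right ((hC x hx).trans (le_abs_self C)) (hF0 x)
    _ = |C| * ∫ x in B, F x := integral_const_mul _ _
    _ ≤ |C| * ∫ x, F x := mul_le_mul_of_nonneg_left
        (setIntegral_le_integral hF (ae_of_all _ hF0)) (abs_nonneg _)

theorem exists_isTest_eq_one {K U : Set (E N)} (hK : IsCompact K) (hU : IsOpen U)
    (hKU : K ⊆ U) :
    ∃ η : E N → ℝ, IsTest η ∧ tsupport η ⊆ U ∧ ∃ V, IsOpen V ∧ K ⊆ V ∧ ∀ x ∈ V, η x = 1 := by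
  obtain ⟨L, hL, hKL, hLU⟩ := exists_compact_between hK hU hKU
  obtain ⟨η, h1, h2, -⟩ := exists_contMDiffMap_one_nhds_of_subset_interior
    (n := (⊤ : ℕ∞)) (modelWithCornersSelf ℝ (E N)) hK.isClosed hKL
  obtain ⟨V, hV, hKV, hV1⟩ := eventually_nhdsSet_iff_exists.1 h1
  have hs : tsupport η ⊆ L := closure_minimal
    (fun x hx => by_contra fun h => hx (h2 x h)) hL.isClosed
  exact ⟨η, ⟨η.contMDiff.contDiff, hL.of_isClosed_subset (isClosed_tsupport _) hs⟩,
    hs.trans hLU, V, hV, hKV, hV1⟩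

theorem contDiff_smul_kelvin {χ : E N → ℝ} (hχ : ContDiff ℝ (⊤ : ℕ∞) χ)
    (h0 : (0 : E N) ∉ tsupport χ) : ContDiff ℝ (⊤ : ℕ∞) (fun x => χ x • kelvin x) := by
  rw [contDiff_iff_contDiffAt]
  intro x
  rcases eq_or_ne x 0 with rfl | hx
  · refine (contDiffAt_const (c := (0 : E N))).congr_of_eventuallyEq ?_
    filter_upwards [notMem_tsupport_iff_eventuallyEq.1 h0] with y hy
    simp [hy]
  · exact hχ.contDiffAt.smul (contDiffAt_kelvin hx)

/-- Composing with an inversion-like map and cutting off costs only a constant factor in the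
`L²` norm of the Laplacian. -/
theorem exists_integral_sq_lap_mul_comp_le (hN : 5 ≤ N) {η : E N → ℝ} (hη : IsTest η)
    (h0 : (0 : E N) ∉ tsupport η) {κ : E N → E N} (hκ : ContDiff ℝ (⊤ : ℕ∞) κ)
    (hκη : ∀ x ∈ tsupport η, κ x = kelvin x) :
    ∃ C, 0 ≤ C ∧ ∀ φ : E N → ℝ, IsTest φ →
      ∫ y, (lap (fun z => η z * (φ ∘ κ) z) y) ^ 2 ≤ C * ∫ x, (lap φ x) ^ 2 := by
  set A := tsupport η
  have hA : IsCompact A := hη.2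
  obtain ⟨C₁, hC₁, hcov⟩ := exists_setIntegral_comp_kelvin_le hA h0
  have hle : ∀ i : ℕ, ((i : ℕ∞) : WithTop ℕ∞) ≤ ((⊤ : ℕ∞) : WithTop ℕ∞) := fun i =>
    WithTop.coe_le_coe.2 le_top
  have hcη : ∀ i : ℕ, Continuous fun x => iteratedFDeriv ℝ i η x := fun i =>
    hη.1.continuous_iteratedFDeriv (hle i)
  have hcκ : ∀ i : ℕ, Continuous fun x => iteratedFDeriv ℝ i κ x := fun i =>
    hκ.continuous_iteratedFDeriv (hle i)
  obtain ⟨M₀, hM₀⟩ := hA.exists_bound_of_continuousOn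
    (f := fun x => ∑ i ∈ Finset.range 3, (‖iteratedFDeriv ℝ i η x‖ + ‖iteratedFDeriv ℝ i κ x‖))
    (by fun_prop)
  obtain ⟨R, hR⟩ := hA.exists_bound_of_continuousOn hκ.continuous.continuousOn
  set M := max M₀ 1
  have hM1 : 1 ≤ M := le_max_right _ _
  have hsum : ∀ x ∈ A, ∀ i ≤ 2, ‖iteratedFDeriv ℝ i η x‖ + ‖iteratedFDeriv ℝ i κ x‖ ≤ M := by
    intro x hx i hi
    refine le_trans ?_ (((le_abs_self _).trans (hM₀ x hx)).trans (le_max_left _ _))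
    exact Finset.single_le_sum
      (f := fun i => ‖iteratedFDeriv ℝ i η x‖ + ‖iteratedFDeriv ℝ i κ x‖)
      (fun _ _ => by positivity) (Finset.mem_range.2 (by omega))
  set C₂ : ℝ := (N * (8 * M ^ 3)) ^ 2 * ((N + 1) ^ 2 * (1 + R ^ 2) ^ 2) with hC₂
  refine ⟨C₂ * (C₁ * 21), by positivity, fun φ hφ => ?_⟩
  obtain ⟨hi, hle21⟩ := integrable_energy_and_integral_le hN hφ
  have hψ : ContDiff ℝ (⊤ : ℕ∞) (fun z => η z * (φ ∘ κ) z) := hη.1.mul (hφ.1.comp hκ)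
  have hpt : ∀ y ∈ A, (lap (fun z => η z * (φ ∘ κ) z) y) ^ 2 ≤ C₂ * energy φ (kelvin y) := by
    intro y hy
    set T := √((N + 1) ^ 2 * (1 + R ^ 2) ^ 2 * energy φ (kelvin y)) with hT
    have hT0 : 0 ≤ T := Real.sqrt_nonneg _
    have hen := energy_nonneg φ (kelvin y)
    have hφT : ∀ i ≤ 2, ‖iteratedFDeriv ℝ i φ (κ y)‖ ≤ T := fun i hi => by
      refine Real.le_sqrt_of_sq_le ((norm_iteratedFDeriv_sq_le_energy hφ.1 (κ y) hi).trans ?_)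
      rw [hκη y hy]
      have := hR y hy
      rw [hκη y hy] at this
      gcongr
    have hcomp : ∀ n ≤ 2, ‖iteratedFDeriv ℝ n (φ ∘ κ) y‖ ≤ 2 * T * M ^ 2 := fun n hn => by
      refine (norm_iteratedFDeriv_comp_le hφ.1 hκ (hle n) y
        (fun i hi => hφT i (hi.trans hn)) (D := M) fun i hi1 hi2 => ?_).trans ?_
      · refine le_trans ?_ (le_self_pow₀ hM1 (by omega))
        exact le_trans (le_add_of_nonneg_left (norm_nonneg _)) (hsum y hy i (hi2.trans hn))
      · have h1 : (n.factorial : ℝ) ≤ 2 := by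
          exact_mod_cast (Nat.factorial_le hn)
        have h2 : M ^ n ≤ M ^ 2 := pow_le_pow_right₀ hM1 hn
        gcongr
    have hηM : ∀ i ≤ 2, ‖iteratedFDeriv ℝ i η y‖ ≤ M := fun i hi =>
      le_trans (le_add_of_nonneg_right (norm_nonneg _)) (hsum y hy i hi)
    have hD2 : ‖iteratedFDeriv ℝ 2 (fun z => η z * (φ ∘ κ) z) y‖ ≤ 8 * M ^ 3 * T := by
      refine (norm_iteratedFDeriv_mul_le hη.1 (hφ.1.comp hκ) y (hle 2)).trans ?_
      calc _ ≤ ∑ i ∈ Finset.range 3, ((2 : ℕ).choose i : ℝ) * M * (2 * T * M ^ 2) := by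
            refine Finset.sum_le_sum fun i hi => ?_
            have hi' : i ≤ 2 := by have := Finset.mem_range.1 hi; omega
            have h1 := hηM i hi'
            have h2 := hcomp (2 - i) (by omega)
            gcongr
        _ = 8 * M ^ 3 * T := by
            simp [Finset.sum_range_succ]; ring
    have hl : |lap (fun z => η z * (φ ∘ κ) z) y| ≤ N * (8 * M ^ 3) * T := by
      refine (abs_lap_le hψ y).trans ?_
      rw [mul_assoc (N : ℝ)]
      gcongr
    calc _ = |lap (fun z => η z * (φ ∘ κ) z) y| ^ 2 := (sq_abs _).symm
      _ ≤ (N * (8 * M ^ 3) * T) ^ 2 := by gcongr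
      _ = _ := by
          rw [mul_pow, hT, Real.sq_sqrt (by positivity), hC₂]; ring
  have hzero : ∀ y ∉ A, (lap (fun z => η z * (φ ∘ κ) z) y) ^ 2 = 0 := by
    intro y hy
    rw [sq_eq_zero_iff, lap_eq_sum]
    refine Finset.sum_eq_zero fun i _ => image_eq_zero_of_notMem_tsupport fun h => hy ?_
    exact tsupport_mul_subset_left (tsupport_fderiv_apply_subset ℝ _
      (tsupport_fderiv_apply_subset ℝ _ h))
  have hcontA : IntegrableOn (fun y => C₂ * energy φ (kelvin y)) A := by
    refine ContinuousOn.integrableOn_compact hA (continuousOn_const.mul ?_)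
    exact hφ.continuous_energy.comp_continuousOn
      (continuousOn_kelvin.mono (subset_compl_singleton_iff.2 h0))
  calc _ = ∫ y in A, (lap (fun z => η z * (φ ∘ κ) z) y) ^ 2 :=
        (setIntegral_eq_integral_of_forall_compl_eq_zero hzero).symm
    _ ≤ ∫ y in A, C₂ * energy φ (kelvin y) := by
        refine integral_mono_of_nonneg (ae_of_all _ fun y => sq_nonneg _) hcontA ?_
        filter_upwards [ae_restrict_mem hA.measurableSet] with y hy using hpt y hy
    _ = C₂ * ∫ y in A, energy φ (kelvin y) := integral_const_mul _ _
    _ ≤ C₂ * (C₁ * (21 * ∫ x, (lap φ x) ^ 2)) := by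
        have hC₂0 : 0 ≤ C₂ := by positivity
        exact mul_le_mul_of_nonneg_left ((hcov _ hi (energy_nonneg φ)).trans
          (mul_le_mul_of_nonneg_left hle21 hC₁)) hC₂0
    _ = _ := by ring

theorem capD_univ_eq_zero_iff {Z : Set (E N)} (hZ : IsCompact Z) :
    capD (Set.univ : Set (E N)) Z = 0 ↔ ∀ ε > 0, ∃ φ : E N → ℝ, IsTest φ ∧
      (∃ V, IsOpen V ∧ Z ⊆ V ∧ ∀ x ∈ V, 1 ≤ φ x) ∧ ∫ x, (lap φ x) ^ 2 < ε := by
  obtain ⟨η, hη, -, V, hV, hZV, hV1⟩ := exists_isTest_eq_one hZ isOpen_univ (subset_univ _)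
  have hlb : (0 : ℝ) ∈ lowerBounds { c | ∃ φ : E N → ℝ, ContDiff ℝ (⊤ : ℕ∞) φ ∧
      HasCompactSupport φ ∧ tsupport φ ⊆ univ ∧
      (∃ V, IsOpen V ∧ Z ⊆ V ∧ ∀ x ∈ V, 1 ≤ φ x) ∧ c = ∫ x in univ, (lap φ x) ^ 2 } := by
    rintro _ ⟨φ, -, -, -, -, rfl⟩
    exact integral_nonneg fun x => sq_nonneg _
  constructor
  · intro h ε hε
    rw [capD] at h
    obtain ⟨_, ⟨φ, h1, h2, -, h3, rfl⟩, hlt⟩ := exists_lt_of_csInf_lt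
      (by exact ⟨_, η, hη.1, hη.2, subset_univ _, ⟨V, hV, hZV, fun x hx => (hV1 x hx).ge⟩, rfl⟩)
      (h.trans_lt hε)
    exact ⟨φ, ⟨h1, h2⟩, h3, by rwa [setIntegral_univ] at hlt⟩
  · intro h
    refine le_antisymm (le_of_forall_pos_lt_add fun ε hε => ?_) (Real.sInf_nonneg hlb)
    obtain ⟨φ, h1, h2, h3⟩ := h ε hε
    rw [zero_add]
    refine lt_of_le_of_lt (csInf_le ⟨0, hlb⟩ ⟨φ, h1.1, h1.2, subset_univ _, h2, rfl⟩) ?_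
    rwa [setIntegral_univ]

theorem kelvin_capacity_zero {N : ℕ} (hN : 5 ≤ N) (Z : Set (E N))
    (hZc : IsCompact Z) (h0 : (0 : E N) ∉ Z)
    (hcap : capD (Set.univ : Set (E N)) Z = 0) :
    capD (Set.univ : Set (E N)) ((fun x : E N => (‖x‖ ^ 2)⁻¹ • x) '' Z) = 0 := by
  change capD univ (kelvin '' Z) = 0
  obtain ⟨hKc, hK0⟩ := isCompact_kelvin_image hZc h0
  rw [capD_univ_eq_zero_iff hKc]
  rw [capD_univ_eq_zero_iff hZc] at hcap
  have hopen : IsOpen ({0}ᶜ : Set (E N)) := isOpen_compl_singleton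
  obtain ⟨η, hη, hη0, W, hW, hKW, hW1⟩ :=
    exists_isTest_eq_one hKc hopen (subset_compl_singleton_iff.2 hK0)
  obtain ⟨χ, hχ, hχ0, W', -, hW', hχ1⟩ := exists_isTest_eq_one hη.2.isCompact hopen hη0
  have hκη : ∀ x ∈ tsupport η, χ x • kelvin x = kelvin x := fun x hx => by
    rw [hχ1 x (hW' hx), one_smul]
  have hκ := contDiff_smul_kelvin hχ.1 fun h => hχ0 h rfl
  obtain ⟨C, hC, hbound⟩ := exists_integral_sq_lap_mul_comp_le hN hη (fun h => hη0 h rfl) hκ hκη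
  intro ε hε
  obtain ⟨φ, hφ, ⟨V, hV, hZV, hV1⟩, hlt⟩ := hcap (ε / (C + 1)) (by positivity)
  refine ⟨_, hη.mul_right (hφ.1.comp hκ), ⟨W ∩ (fun x => χ x • kelvin x) ⁻¹' V,
    hW.inter (hV.preimage hκ.continuous), ?_, ?_⟩, ?_⟩
  · rintro y ⟨z, hz, rfl⟩
    have hy : kelvin z ∈ W := hKW ⟨z, hz, rfl⟩
    have hys : kelvin z ∈ tsupport η := subset_tsupport _ (by simp [hW1 _ hy])
    refine ⟨hy, ?_⟩
    rw [mem_preimage, hκη _ hys, kelvin_kelvin]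
    exact hZV hz
  · rintro y ⟨hy, hyV⟩
    simpa [hW1 y hy] using hV1 _ hyV
  · calc _ ≤ C * ∫ x, (lap φ x) ^ 2 := hbound φ hφ
      _ ≤ C * (ε / (C + 1)) := mul_le_mul_of_nonneg_left hlt.le hC
      _ < ε := by
        rw [mul_div_assoc', div_lt_iff₀ (by positivity)]
        nlinarith
end
end

section
/- Let N ≥ 5, p > N/(N-4), and let u ≥ 0 be a distributional solution of Δ²u = u^p on ℝ^N with u ∈ L^p_loc(ℝ^N). Then for every R > 0, ∫_{B_R} u^p dx ≤ C R^{N - 4p/(p-1)} with C independent of R, and consequently ∫_{B_R} u dx ≤ C R^{N - 4/(p-1)}. -/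
open MeasureTheory Metric Set Filter

noncomputable section

theorem le_add_rpow_mul_rpow {p t l : ℝ} (hp : 1 < p) (ht : 0 ≤ t) (hl : 0 < l) :
    t ≤ l + l ^ (1 - p) * t ^ p := by
  rcases le_or_gt t l with h | h
  · have : 0 ≤ l ^ (1 - p) * t ^ p := by positivity
    linarith
  · have ht' : 0 < t := hl.trans h
    have h1 : t ^ (1 - p) ≤ l ^ (1 - p) :=
      Real.rpow_le_rpow_of_nonpos hl h.le (by linarith)
    have h2 : t ^ (1 - p) * t ^ p = t := by
      rw [← Real.rpow_add ht']; simp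
    have h3 : t ^ (1 - p) * t ^ p ≤ l ^ (1 - p) * t ^ p := by gcongr
    linarith

theorem fderiv_pow_succ_mul_apply {N : ℕ} {η g : E N → ℝ} (hη : ContDiff ℝ (⊤ : ℕ∞) η)
    (hg : ContDiff ℝ (⊤ : ℕ∞) g) (k : ℕ) (v : E N) :
    ∃ h : E N → ℝ, ContDiff ℝ (⊤ : ℕ∞) h ∧
      (fun x => fderiv ℝ (fun y => η y ^ (k + 1) * g y) x v) = fun x => η x ^ k * h x := by
  refine ⟨fun x => (k + 1) * fderiv ℝ η x v * g x + η x * fderiv ℝ g x v, ?_, ?_⟩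
  · have h1 : ContDiff ℝ (⊤ : ℕ∞) (fun x => fderiv ℝ η x v) :=
      (hη.fderiv_right (m := (⊤ : ℕ∞)) (by simp)).clm_apply contDiff_const
    have h2 : ContDiff ℝ (⊤ : ℕ∞) (fun x => fderiv ℝ g x v) :=
      (hg.fderiv_right (m := (⊤ : ℕ∞)) (by simp)).clm_apply contDiff_const
    fun_prop
  · funext x
    have d1 : HasFDerivAt η (fderiv ℝ η x) x := (hη.differentiable (by simp) x).hasFDerivAt
    have d2 : HasFDerivAt g (fderiv ℝ g x) x := (hg.differentiable (by simp) x).hasFDerivAt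
    have d3 := (d1.pow (k + 1)).mul d2
    have : fderiv ℝ (fun y => η y ^ (k + 1) * g y) x = _ := d3.fderiv
    rw [this]
    simp
    ring

theorem lap_pow_add_two_mul {N : ℕ} {η g : E N → ℝ} (hη : ContDiff ℝ (⊤ : ℕ∞) η)
    (hg : ContDiff ℝ (⊤ : ℕ∞) g) (k : ℕ) :
    ∃ h : E N → ℝ, ContDiff ℝ (⊤ : ℕ∞) h ∧
      lap (fun y => η y ^ (k + 2) * g y) = fun x => η x ^ k * h x := by
  choose g₁ hg₁ e₁ using fun i : Fin N =>
    fderiv_pow_succ_mul_apply hη hg (k + 1) (EuclideanSpace.single i 1)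
  choose g₂ hg₂ e₂ using fun i : Fin N =>
    fderiv_pow_succ_mul_apply hη (hg₁ i) k (EuclideanSpace.single i 1)
  refine ⟨fun x => ∑ i, g₂ i x, ContDiff.sum fun i _ => hg₂ i, ?_⟩
  funext x
  simp only [lap, Finset.mul_sum]
  refine Finset.sum_congr rfl fun i _ => ?_
  rw [e₁ i]
  exact congrFun (e₂ i) x

theorem exists_abs_lap_lap_pow_le {N : ℕ} {η : E N → ℝ} (hη : ContDiff ℝ (⊤ : ℕ∞) η)
    (hc : HasCompactSupport η) (h0 : ∀ x, 0 ≤ η x) {k : ℕ} (hk : k ≠ 0) :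
    ∃ C > 0, ∀ x, |lap (lap fun y => η y ^ (k + 4)) x| ≤ C * η x ^ k := by
  obtain ⟨g, hg, e⟩ := lap_pow_add_two_mul hη (contDiff_const (c := (1 : ℝ))) (k + 2)
  obtain ⟨h, hh, e'⟩ := lap_pow_add_two_mul hη hg k
  simp only [mul_one] at e
  obtain ⟨C, hC⟩ := hc.exists_bound_of_continuousOn hh.continuous.continuousOn
  refine ⟨max C 1, by positivity, fun x => ?_⟩
  rw [show k + 4 = k + 2 + 2 from rfl, e, e']
  by_cases hx : x ∈ tsupport η
  · rw [abs_mul, abs_of_nonneg (pow_nonneg (h0 x) k), mul_comm]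
    gcongr
    · exact pow_nonneg (h0 x) k
    · exact (hC x hx).trans (le_max_left _ _)
  · simp [image_eq_zero_of_notMem_tsupport hx, hk]

theorem lap_const_smul {N : ℕ} (f : E N → ℝ) (a c : ℝ) :
    lap (fun y => a * f (c • y)) = fun x => a * c ^ 2 * lap f (c • x) := by
  have key : ∀ (b : ℝ) (g : E N → ℝ) (x v : E N),
      fderiv ℝ (fun y => b * g (c • y)) x v = b * c * fderiv ℝ g (c • x) v := by
    intro b g x v
    have h1 : (fun y => b * g (c • y)) = b • fun y => g (c • y) := rfl
    rw [h1, fderiv_const_smul_field, Pi.smul_apply, fderiv_comp_smul]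
    simp [mul_assoc]
  funext x
  simp only [lap, Finset.mul_sum, key]
  refine Finset.sum_congr rfl fun i _ => ?_
  rw [key (a * c) (fun y => fderiv ℝ f y (EuclideanSpace.single i 1))]
  ring

theorem lap_lap_comp_smul {N : ℕ} (f : E N → ℝ) (c : ℝ) (x : E N) :
    lap (lap fun y => f (c • y)) x = c ^ 4 * lap (lap f) (c • x) := by
  have h := lap_const_smul f 1 c
  simp only [one_mul] at h
  rw [h, lap_const_smul]
  ring

/-- A smooth cutoff, equal to one on the unit ball and supported in the ball of radius two,
whose bilaplacian is controlled by its `p`-th root. -/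
theorem exists_cutoff_abs_lap_lap_le (N : ℕ) {p : ℝ} (hp : 1 < p) :
    ∃ ψ : E N → ℝ, ContDiff ℝ (⊤ : ℕ∞) ψ ∧ HasCompactSupport ψ ∧ (∀ x, 0 ≤ ψ x) ∧
      (∀ x ∈ ball (0 : E N) 1, ψ x = 1) ∧ (∀ x ∉ closedBall (0 : E N) 2, ψ x = 0) ∧
      ∃ C > 0, ∀ x, |lap (lap ψ) x| ≤ C * ψ x ^ (1 / p) := by
  let η : ContDiffBump (0 : E N) := ⟨1, 2, one_pos, one_lt_two⟩
  obtain ⟨k, hk⟩ := exists_nat_ge (4 / (p - 1))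
  have hp1 : 0 < p - 1 := by linarith
  have hk0 : k ≠ 0 := by
    rintro rfl
    have : 0 < 4 / (p - 1) := by positivity
    simp at hk
    linarith
  have hη : ContDiff ℝ (⊤ : ℕ∞) η := η.contDiff
  obtain ⟨C, hC, hb⟩ :=
    exists_abs_lap_lap_pow_le hη η.hasCompactSupport (fun x => η.nonneg) hk0
  refine ⟨fun x => η x ^ (k + 4), hη.pow _, ?_, fun x => pow_nonneg η.nonneg _, ?_, ?_, C, hC,
    fun x => (hb x).trans ?_⟩
  · exact η.hasCompactSupport.comp_left (g := fun t : ℝ => t ^ (k + 4)) (by simp)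
  · intro x hx
    simp [η.one_of_mem_closedBall (ball_subset_closedBall hx)]
  · intro x hx
    have : η x = 0 := η.zero_of_le_dist (by
      rw [mem_closedBall, not_le] at hx
      exact hx.le)
    simp [this]
  · gcongr
    beta_reduce
    rw [← Real.rpow_natCast, ← Real.rpow_natCast, ← Real.rpow_mul η.nonneg]
    rcases η.nonneg (x := x).eq_or_lt with h | h
    · rw [← h, Real.zero_rpow (by exact_mod_cast hk0)]
      positivity
    · refine Real.rpow_le_rpow_of_exponent_ge h η.le_one ?_
      rw [div_le_iff₀ hp1] at hk
      rw [mul_one_div, div_le_iff₀ (by linarith)]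
      push_cast
      linarith

theorem distributional_energy_estimates {N : ℕ} (hN : 5 ≤ N) (p : ℝ)
    (hp : (N : ℝ) / ((N : ℝ) - 4) < p)
    (u : E N → ℝ) (hnn : ∀ x, 0 ≤ u x)
    (huloc : LocallyIntegrable u volume)
    (huploc : LocallyIntegrable (fun x => u x ^ p) volume)
    (hsol : ∀ φ : E N → ℝ, ContDiff ℝ (⊤ : ℕ∞) φ → HasCompactSupport φ →
      ∫ x, u x * lap (lap φ) x = ∫ x, u x ^ p * φ x) :
    ∃ C > (0 : ℝ), ∀ R : ℝ, 0 < R →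
      (∫ x in Metric.ball (0 : E N) R, u x ^ p) ≤ C * R ^ ((N : ℝ) - 4 * p / (p - 1)) ∧
      (∫ x in Metric.ball (0 : E N) R, u x) ≤ C * R ^ ((N : ℝ) - 4 / (p - 1)) := by
  have hN' : (5 : ℝ) ≤ N := by exact_mod_cast hN
  have hp1 : 1 < p := by
    refine lt_of_le_of_lt ?_ hp
    rw [le_div_iff₀ (by linarith)]
    linarith
  have hp0 : 0 < p := by linarith
  have hq : 0 < p - 1 := by linarith
  obtain ⟨ψ, hψ, hψc, hψ0, hψ1, hψ2, A, hA, hbd⟩ := exists_cutoff_abs_lap_lap_le N hp1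
  set V : ℝ := volume.real (ball (0 : E N) 1)
  set K : ℝ := A * (2 * A) ^ (1 / (p - 1))
  have hV : 0 ≤ V := measureReal_nonneg
  have hK : 0 < K := by positivity
  have hfirst : ∀ R : ℝ, 0 < R → (∫ x in ball (0 : E N) R, u x ^ p) ≤
      2 * K * 2 ^ N * V * R ^ ((N : ℝ) - 4 * p / (p - 1)) := by
    intro R hR
    have hR' : R⁻¹ ≠ 0 := by positivity
    set φ : E N → ℝ := fun x => ψ (R⁻¹ • x)
    have hφ : ContDiff ℝ (⊤ : ℕ∞) φ := hψ.comp (contDiff_const_smul _)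
    have hφc : HasCompactSupport φ := hψc.comp_smul hR'
    have hint : Integrable (fun x => u x ^ p * φ x) := by
      simpa [mul_comm] using
        huploc.integrable_smul_left_of_hasCompactSupport hφ.continuous hφc
    set B := closedBall (0 : E N) (2 * R)
    have hind : Integrable (B.indicator fun _ => K * R ^ (-(4 * p / (p - 1)))) :=
      (integrable_indicator_iff measurableSet_closedBall).2
        (integrableOn_const measure_closedBall_lt_top.ne)
    have hpt : ∀ x, ‖u x * lap (lap φ) x‖ ≤
        1 / 2 * (u x ^ p * φ x) + B.indicator (fun _ => K * R ^ (-(4 * p / (p - 1)))) x := by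
      intro x
      have h1 : |lap (lap φ) x| ≤ R⁻¹ ^ 4 * (A * φ x ^ (1 / p)) := by
        rw [lap_lap_comp_smul, abs_mul, abs_of_nonneg (by positivity)]
        gcongr
        exact hbd _
      rw [Real.norm_eq_abs, abs_mul, abs_of_nonneg (hnn x)]
      by_cases hx : x ∈ B
      · rw [indicator_of_mem hx]
        set l : ℝ := (2 * A) ^ (1 / (p - 1)) * R ^ (-(4 / (p - 1)))
        have hl : 0 < l := by positivity
        have hφx : 0 ≤ φ x := hψ0 _
        have h2 := le_add_rpow_mul_rpow hp1
          (mul_nonneg (hnn x) (Real.rpow_nonneg hφx (1 / p))) hl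
        have h3 : (u x * φ x ^ (1 / p)) ^ p = u x ^ p * φ x := by
          rw [Real.mul_rpow (hnn x) (by positivity), ← Real.rpow_mul hφx,
            one_div_mul_cancel hp0.ne', Real.rpow_one]
        have h4 : l ^ (1 - p) = (2 * A)⁻¹ * R ^ 4 := by
          rw [Real.mul_rpow (by positivity) (by positivity), ← Real.rpow_mul (by positivity),
            ← Real.rpow_mul hR.le, show 1 / (p - 1) * (1 - p) = -1 by field_simp; ring,
            show -(4 / (p - 1)) * (1 - p) = (4 : ℕ) by field_simp; push_cast; ring,
            Real.rpow_neg_one, Real.rpow_natCast]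
        have h5 : R⁻¹ ^ 4 * A * l = K * R ^ (-(4 * p / (p - 1))) := by
          have : R⁻¹ ^ 4 = R ^ (-4 : ℝ) := by
            rw [Real.rpow_neg hR.le, inv_pow]; norm_cast
          rw [show -(4 * p / (p - 1)) = -4 + -(4 / (p - 1)) by field_simp; ring,
            Real.rpow_add hR, this]
          ring
        rw [h3, h4] at h2
        calc u x * |lap (lap φ) x| ≤ u x * (R⁻¹ ^ 4 * (A * φ x ^ (1 / p))) := by
              gcongr
              exact hnn x
          _ = R⁻¹ ^ 4 * A * (u x * φ x ^ (1 / p)) := by ring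
          _ ≤ R⁻¹ ^ 4 * A * (l + (2 * A)⁻¹ * R ^ 4 * (u x ^ p * φ x)) := by gcongr
          _ = 1 / 2 * (u x ^ p * φ x) + R⁻¹ ^ 4 * A * l := by field_simp; ring
          _ = _ := by rw [h5]
      · have hφx : φ x = 0 := by
          refine hψ2 _ fun h => hx ?_
          rw [mem_closedBall_zero_iff, norm_smul, norm_inv, Real.norm_of_nonneg hR.le,
            inv_mul_le_iff₀ hR] at h
          rw [mem_closedBall_zero_iff]
          linarith
        rw [indicator_of_notMem hx]
        rw [hφx, Real.zero_rpow (by positivity)] at h1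
        have : |lap (lap φ) x| = 0 := le_antisymm (by simpa using h1) (abs_nonneg _)
        simp [this, hφx]
    have hvol : volume.real B = (2 * R) ^ N * V := by
      simpa using Measure.addHaar_real_closedBall (volume : Measure (E N)) 0
        (by positivity : 0 ≤ 2 * R)
    have hle := norm_integral_le_of_norm_le ((hint.const_mul (1 / 2)).add hind)
      (Eventually.of_forall hpt)
    simp only [Pi.add_apply] at hle
    rw [hsol φ hφ hφc, integral_add (hint.const_mul _) hind, integral_const_mul,
      integral_indicator measurableSet_closedBall, setIntegral_const, hvol, smul_eq_mul] at hle
    have hball : (∫ x in ball (0 : E N) R, u x ^ p) ≤ ∫ x, u x ^ p * φ x := by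
      have : (∫ x in ball (0 : E N) R, u x ^ p) = ∫ x in ball (0 : E N) R, u x ^ p * φ x := by
        refine setIntegral_congr_fun measurableSet_ball fun x hx => ?_
        have : φ x = 1 := by
          refine hψ1 _ ?_
          rw [mem_ball_zero_iff] at hx ⊢
          rw [norm_smul, norm_inv, Real.norm_of_nonneg hR.le, inv_mul_lt_iff₀ hR]
          linarith
        simp [this]
      rw [this]
      exact setIntegral_le_integral hint
        (Eventually.of_forall fun x => mul_nonneg (Real.rpow_nonneg (hnn x) _) (hψ0 _))
    have hexp : R ^ ((N : ℝ) - 4 * p / (p - 1)) = R ^ N * R ^ (-(4 * p / (p - 1))) := by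
      rw [sub_eq_add_neg, Real.rpow_add hR, Real.rpow_natCast]
    have hself := (le_abs_self _).trans hle
    rw [hexp]
    rw [mul_pow] at hself
    linarith
  refine ⟨2 * K * 2 ^ N * V + V + 1, by positivity, fun R hR => ⟨?_, ?_⟩⟩
  · refine (hfirst R hR).trans ?_
    gcongr
    linarith
  · set l : ℝ := R ^ (-(4 / (p - 1)))
    have hl : 0 < l := by positivity
    have hip : IntegrableOn (fun x => u x ^ p) (ball (0 : E N) R) :=
      (huploc.integrableOn_isCompact (isCompact_closedBall 0 R)).mono_set ball_subset_closedBall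
    have hi : IntegrableOn u (ball (0 : E N) R) :=
      (huloc.integrableOn_isCompact (isCompact_closedBall 0 R)).mono_set ball_subset_closedBall
    have hic : IntegrableOn (fun _ => l) (ball (0 : E N) R) :=
      integrableOn_const measure_ball_lt_top.ne
    have hvol : volume.real (ball (0 : E N) R) = R ^ N * V := by
      simp [V, Measure.real, Measure.addHaar_ball_of_pos (volume : Measure (E N)) 0 hR, hR.le]
    have hle : (∫ x in ball (0 : E N) R, u x) ≤
        ∫ x in ball (0 : E N) R, (l + l ^ (1 - p) * u x ^ p) :=
      integral_mono hi (hic.add (hip.const_mul _))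
        fun x => le_add_rpow_mul_rpow hp1 (hnn x) hl
    rw [integral_add hic (hip.const_mul _), integral_const_mul, setIntegral_const, hvol,
      smul_eq_mul] at hle
    have h1 : R ^ N * l = R ^ ((N : ℝ) - 4 / (p - 1)) := by
      rw [sub_eq_add_neg, Real.rpow_add hR, Real.rpow_natCast]
    have h2 : l ^ (1 - p) * R ^ ((N : ℝ) - 4 * p / (p - 1)) = R ^ ((N : ℝ) - 4 / (p - 1)) := by
      rw [← Real.rpow_mul hR.le, ← Real.rpow_add hR]
      congr 1
      field_simp
      ring
    have h3 := mul_le_mul_of_nonneg_left (hfirst R hR) (Real.rpow_nonneg hl.le (1 - p))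
    calc (∫ x in ball (0 : E N) R, u x)
        ≤ R ^ N * V * l + l ^ (1 - p) *
          (2 * K * 2 ^ N * V * R ^ ((N : ℝ) - 4 * p / (p - 1))) := hle.trans (by gcongr)
      _ = V * (R ^ N * l) + 2 * K * 2 ^ N * V *
          (l ^ (1 - p) * R ^ ((N : ℝ) - 4 * p / (p - 1))) := by ring
      _ = (2 * K * 2 ^ N * V + V) * R ^ ((N : ℝ) - 4 / (p - 1)) := by rw [h1, h2]; ring
      _ ≤ _ := by gcongr ?_ * _; linarith
end
end
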